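/- Let k be a commutative field, E/k a field extension of finite degree over a purely transcendental subextension K = k((xᵢ)ᵢ) with E/K monogenous (generated by one element), and suppose (L_j/K)_{j∈ℕ} is an infinite family of pairwise linearly disjoint Galois extensions of K inside a fixed algebraic closure, each with Galois group G. Then infinitely many of the L_j are linearly disjoint from E over K; in particular there exists j with E ⊗_K L_j a field and Gal(E ⊗_K L_j / E) ≅ G. -/

import Mathlib

open scoped TensorProduct

/-- If `E ⊗ L` is a domain, restriction identifies `Gal(E ⊗ L / E)` with `Gal(L / K)`. -/
theorem gal_tensor_aux (K E L : Type*) [Field K] [Field E] [Field L] [Algebra K E] [Algebra K L]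
    [FiniteDimensional K L] [IsGalois K L] [IsDomain (E ⊗[K] L)] :
    Nonempty ((L ≃ₐ[K] L) ≃* (E ⊗[K] L ≃ₐ[E] E ⊗[K] L)) := by
  let φ : (L ≃ₐ[K] L) →* (E ⊗[K] L ≃ₐ[E] E ⊗[K] L) :=
    { toFun := fun σ => Algebra.TensorProduct.congr AlgEquiv.refl σ
      map_one' := by
        ext x
        induction x with
        | zero => simp
        | add x y hx hy => rw [map_add, hx, hy, map_add]
        | tmul a b => simp
      map_mul' := fun σ τ => by
        ext x
        induction x with
        | zero => simp
        | add x y hx hy => rw [map_add, hx, hy, map_add]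
        | tmul a b => simp }
  have hinj : Function.Injective φ := by
    intro σ τ h
    ext b
    have h1 := DFunLike.congr_fun h ((1 : E) ⊗ₜ[K] b)
    have h2 : (1 : E) ⊗ₜ[K] (σ b) = (1 : E) ⊗ₜ[K] (τ b) := by simpa [φ] using h1
    exact Algebra.TensorProduct.includeRight_injective
      (R := K) (A := E) (B := L) (algebraMap K E).injective h2
  have hfa : Finite (E ⊗[K] L →ₐ[E] E ⊗[K] L) := Finite.algHom E (E ⊗[K] L) (E ⊗[K] L)
  have hinj2 : Function.Injective (fun f : E ⊗[K] L ≃ₐ[E] E ⊗[K] L =>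
      (f : E ⊗[K] L →ₐ[E] E ⊗[K] L)) :=
    AlgEquiv.coe_toAlgHom_injective
  have hfe : Finite (E ⊗[K] L ≃ₐ[E] E ⊗[K] L) :=
    Finite.of_injective _ hinj2
  have hcard : Nat.card (E ⊗[K] L ≃ₐ[E] E ⊗[K] L) ≤ Nat.card (L ≃ₐ[K] L) := by
    have h1 : Module.finrank E (E ⊗[K] L) = Module.finrank K L := Module.finrank_baseChange
    rw [IsGalois.card_aut_eq_finrank, ← h1]
    exact (Nat.card_le_card_of_injective _ hinj2).trans (card_algHom_le_finrank E _ _)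
  exact ⟨MulEquiv.ofBijective φ (hinj.bijective_of_nat_card_le hcard)⟩

/-- Let `K` be a (commutative) field, `Ω` an extension of `K`, `E = K(α)` a monogenous
finite-degree subextension, and `(L j)_{j ∈ ℕ}` a family of pairwise linearly disjoint
(i.e. with pairwise trivial intersections) Galois subextensions of `Ω/K`, each with
Galois group isomorphic to the finite group `G`.  Then infinitely many of the `L j` are
linearly disjoint from `E` over `K`; in particular there is a `j` with `E ∩ L j = K`,
`E ⊗_K L j` a field, and `Gal(E ⊗_K L j / E) ≅ G`. -/
theorem infinitely_many_linearly_disjoint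
    {K Ω : Type*} [Field K] [Field Ω] [Algebra K Ω]
    (G : Type*) [Group G] [Finite G]
    (E : IntermediateField K Ω) (α : Ω) (hE : E = IntermediateField.adjoin K {α})
    (hfin : FiniteDimensional K E)
    (L : ℕ → IntermediateField K Ω)
    (hgal : ∀ j, IsGalois K (L j))
    (hG : ∀ j, Nonempty ((↥(L j) ≃ₐ[K] ↥(L j)) ≃* G))
    (hdisj : ∀ i j, i ≠ j → L i ⊓ L j = ⊥) :
    {j : ℕ | E ⊓ L j = ⊥}.Infinite ∧
    ∃ j : ℕ, E ⊓ L j = ⊥ ∧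
      IsField (TensorProduct K E (L j)) ∧
      Nonempty ((TensorProduct K E (L j) ≃ₐ[E] TensorProduct K E (L j)) ≃* G) := by
  have hfinIF : Finite (IntermediateField K E) := by
    apply Field.finite_intermediateField_of_exists_primitive_element
    subst hE
    refine ⟨IntermediateField.AdjoinSimple.gen K α, ?_⟩
    rw [← IntermediateField.lift_inj, IntermediateField.lift_top,
      IntermediateField.lift_adjoin_simple, IntermediateField.AdjoinSimple.coe_gen]
  have hbad : {j : ℕ | E ⊓ L j ≠ ⊥}.Finite := by
    refine Set.Finite.of_finite_image (f := fun j => IntermediateField.restrict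
      (inf_le_left : E ⊓ L j ≤ E)) (Set.toFinite _) ?_
    intro i hi j _ hij
    by_contra hne
    apply hi
    have h := congrArg IntermediateField.lift hij
    simp only [IntermediateField.lift_restrict] at h
    rw [eq_bot_iff, ← hdisj i j hne]
    exact le_inf inf_le_right (h ▸ inf_le_right)
  have hinf : {j : ℕ | E ⊓ L j = ⊥}.Infinite := by
    have := hbad.infinite_compl
    simpa [Set.compl_def] using this
  refine ⟨hinf, ?_⟩
  obtain ⟨j, hj⟩ := hinf.nonempty
  have hj' : E ⊓ L j = ⊥ := hj
  obtain ⟨e⟩ := hG j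
  have := hgal j
  have : Finite (↥(L j) ≃ₐ[K] ↥(L j)) := Finite.of_equiv G e.symm.toEquiv
  have hfd : FiniteDimensional K (L j) :=
    IsGaloisGroup.finiteDimensional (↥(L j) ≃ₐ[K] ↥(L j)) K (L j)
  have hld : E.LinearDisjoint (L j) :=
    (IntermediateField.LinearDisjoint.of_inf_eq_bot (by rwa [inf_comm])).symm
  have hdom : IsDomain (TensorProduct K E (L j)) := hld.isDomain
  refine ⟨j, hj', hld.isField_of_isAlgebraic (Or.inl inferInstance), ?_⟩
  obtain ⟨f⟩ := gal_tensor_aux K E (L j)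
  exact ⟨f.symm.trans e⟩
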